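/- Let (A, ≺_ω, ≻_ω, Ω) be a pre-anti-flexible family algebra. Define, for all α, β ∈ Ω and x, y ∈ A, x ∗_{α,β} y := x ≻_α y + x ≺_β y. Then (A, ∗_{α,β}, Ω) is an Ω-relative anti-flexible algebra, i.e. (x ∗_{α,β} y) ∗_{αβ,γ} z − x ∗_{α,βγ} (y ∗_{β,γ} z) = (z ∗_{γ,β} y) ∗_{γβ,α} x − z ∗_{γ,βα} (y ∗_{β,α} x) for all x, y, z ∈ A and α, β, γ ∈ Ω. -/

import Mathlib

/-!
The associator of `x ∗_{α,β} y = x ≻_α y + x ≺_β y` is the sum of a left, a middle and a right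
associator. When the triple `(x, y, z)` and its indices are reversed, the first axiom of a
pre-anti-flexible family algebra fixes the middle one and the second axiom exchanges the outer
two, so the sum is unchanged.
-/

section Associators

variable {k Ω A : Type*} [CommSemiring k] [AddCommGroup A] [Module k A]

/-- The associator of a family of products `·_{α,β}` indexed by pairs, in which a product of
elements carries the product of their indices. -/
def relativeAssociator [Mul Ω] (op : Ω → Ω → A →ₗ[k] A →ₗ[k] A) (α β γ : Ω) (x y z : A) : A :=
  op (α * β) γ (op α β x y) z - op α (β * γ) x (op β γ y z)

/-- The defining identity of an `Ω`-relative anti-flexible algebra: the associator is invariant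
under reversal of its arguments together with their indices. -/
def IsRelativeAntiFlexible [Mul Ω] (op : Ω → Ω → A →ₗ[k] A →ₗ[k] A) : Prop :=
  ∀ (α β γ : Ω) (x y z : A),
    relativeAssociator op α β γ x y z = relativeAssociator op γ β α z y x

variable (prec succ : Ω → A →ₗ[k] A →ₗ[k] A)

/-- The sum product `x ∗_{α,β} y = x ≻_α y + x ≺_β y` of two families of products. -/
def sumProduct (α β : Ω) : A →ₗ[k] A →ₗ[k] A :=
  succ α + prec β

/-- The left associator `(x ∗_{α,β} y) ≻_{αβ} z - x ≻_α (y ≻_β z)`, which measures the failure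
of `≻` to be a left action of the sum product. -/
def leftAssociator [Mul Ω] (α β : Ω) (x y z : A) : A :=
  succ (α * β) (sumProduct prec succ α β x y) z - succ α x (succ β y z)

/-- The middle associator `(x ≻_α y) ≺_γ z - x ≻_α (y ≺_γ z)`, which measures the failure of
the two families to commute. -/
def middleAssociator (α γ : Ω) (x y z : A) : A :=
  prec γ (succ α x y) z - succ α x (prec γ y z)

/-- The right associator `(x ≺_β y) ≺_γ z - x ≺_{βγ} (y ∗_{β,γ} z)`, which measures the failure
of `≺` to be a right action of the sum product. -/
def rightAssociator [Mul Ω] (β γ : Ω) (x y z : A) : A :=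
  prec γ (prec β x y) z - prec (β * γ) x (sumProduct prec succ β γ y z)

/-- The two axioms of a pre-anti-flexible family algebra, with `prec ω` and `succ ω` standing for
`≺_ω` and `≻_ω`, written in terms of the three associators of the pair. -/
structure IsPreAntiFlexibleFamily [Mul Ω] : Prop where
  middleAssociator_reverse : ∀ (α γ : Ω) (x y z : A),
    middleAssociator prec succ α γ x y z = middleAssociator prec succ γ α z y x
  leftAssociator_eq_rightAssociator : ∀ (α β : Ω) (x y z : A),
    leftAssociator prec succ α β x y z = rightAssociator prec succ β α z y x

theorem relativeAssociator_sumProduct [Mul Ω] (α β γ : Ω) (x y z : A) :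
    relativeAssociator (sumProduct prec succ) α β γ x y z =
      leftAssociator prec succ α β x y z + middleAssociator prec succ α γ x y z +
        rightAssociator prec succ β γ x y z := by
  simp only [relativeAssociator, leftAssociator, middleAssociator, rightAssociator, sumProduct,
    map_add, LinearMap.add_apply]
  abel

variable {prec succ}

theorem preAntiFlexibleFamily_to_relativeAntiFlexible_general [Mul Ω]
    (h : IsPreAntiFlexibleFamily prec succ) :
    IsRelativeAntiFlexible (sumProduct prec succ) := by
  intro α β γ x y z
  calc relativeAssociator (sumProduct prec succ) α β γ x y z
      = leftAssociator prec succ α β x y z + middleAssociator prec succ α γ x y z +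
          rightAssociator prec succ β γ x y z :=
        relativeAssociator_sumProduct prec succ α β γ x y z
    _ = rightAssociator prec succ β α z y x + middleAssociator prec succ γ α z y x +
          leftAssociator prec succ γ β z y x := by
        rw [h.leftAssociator_eq_rightAssociator α β x y z, h.middleAssociator_reverse α γ x y z,
          h.leftAssociator_eq_rightAssociator γ β z y x]
    _ = leftAssociator prec succ γ β z y x + middleAssociator prec succ γ α z y x +
          rightAssociator prec succ β α z y x := by
        abel
    _ = relativeAssociator (sumProduct prec succ) γ β α z y x :=
        (relativeAssociator_sumProduct prec succ γ β α z y x).symm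

end Associators

/-- The sum product `x ∗_{α,β} y := x ≻_α y + x ≺_β y` of a
pre-anti-flexible family algebra yields an Ω-relative anti-flexible algebra. -/
theorem preAntiFlexibleFamily_to_relativeAntiFlexible
    (k : Type*) [Field k] (Ω : Type*) [CommSemigroup Ω]
    (A : Type*) [AddCommGroup A] [Module k A]
    (prec succ : Ω → A →ₗ[k] A →ₗ[k] A)
    (h1 : ∀ (α β : Ω) (x y z : A),
      prec β (succ α x y) z - succ α x (prec β y z) =
        prec α (succ β z y) x - succ β z (prec α y x))
    (h2 : ∀ (α β : Ω) (x y z : A),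
      succ (α * β) (succ α x y + prec β x y) z - succ α x (succ β y z) =
        prec α (prec β z y) x - prec (β * α) z (succ β y x + prec α y x))
    (star : Ω → Ω → A → A → A)
    (hstar : ∀ (α β : Ω) (x y : A), star α β x y = succ α x y + prec β x y) :
    ∀ (α β γ : Ω) (x y z : A),
      star (α * β) γ (star α β x y) z - star α (β * γ) x (star β γ y z) =
        star (γ * β) α (star γ β z y) x - star γ (β * α) z (star β α y x) := by
  obtain rfl : star = fun α β x y ↦ sumProduct prec succ α β x y := by
    funext α β x y
    exact hstar α β x y
  exact preAntiFlexibleFamily_to_relativeAntiFlexible_general ⟨h1, h2⟩
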